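/- Let $d\ge 0$ and let $\mathcal H=\{H_1,\dots,H_n\}$ be a finite arrangement of $n$ affine hyperplanes in $\mathbb R^d$ in general position, meaning that the intersection of any $k\le d$ of the hyperplanes is an affine subspace of dimension $d-k$ and that no $d+1$ of them have a common point. Assume $n=|\mathcal H|\ge d$. The chambers of $\mathcal H$ are the connected components of $\mathbb R^d\setminus\bigcup_{i=1}^n H_i$. The chamber graph has the chambers as vertices, two chambers being adjacent if and only if they are separated by exactly one hyperplane of $\mathcal H$ (equivalently, they share a common facet). For a set $S$ of chambers, let $\partial S$ denote the set of edges of the chamber graph with exactly one endpoint in $S$. If $|S|\le 2^{d-1}$ (for $d=0$ this reads $|S|\le\tfrac12$), then $|\partial S|\ge|S|$. -/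

import Mathlib

/-- An arrangement of `n` affine hyperplanes in `ℝ^d`, given by nonzero normal vectors and
offsets: the `i`-th hyperplane is `{x | ∑ j, normal i j * x j = offset i}`. -/
structure Arrangement (d n : ℕ) where
  normal : Fin n → (Fin d → ℝ)
  offset : Fin n → ℝ
  normal_ne : ∀ i, normal i ≠ 0

namespace Arrangement

/-- The `i`-th hyperplane of the arrangement. -/
def H {d n : ℕ} (𝓗 : Arrangement d n) (i : Fin n) : Set (Fin d → ℝ) :=
  {x | ∑ j, 𝓗.normal i j * x j = 𝓗.offset i}

/-- The positive open half-space determined by the `i`-th hyperplane. -/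
def pos {d n : ℕ} (𝓗 : Arrangement d n) (i : Fin n) : Set (Fin d → ℝ) :=
  {x | 𝓗.offset i < ∑ j, 𝓗.normal i j * x j}

/-- The negative open half-space determined by the `i`-th hyperplane. -/
def neg {d n : ℕ} (𝓗 : Arrangement d n) (i : Fin n) : Set (Fin d → ℝ) :=
  {x | ∑ j, 𝓗.normal i j * x j < 𝓗.offset i}

/-- The complement of the union of the hyperplanes. -/
def free {d n : ℕ} (𝓗 : Arrangement d n) : Set (Fin d → ℝ) := (⋃ i, 𝓗.H i)ᶜ

/-- The chambers: connected components of the complement of the hyperplanes. -/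
def chambers {d n : ℕ} (𝓗 : Arrangement d n) : Set (Set (Fin d → ℝ)) :=
  {C | ∃ x ∈ 𝓗.free, C = connectedComponentIn 𝓗.free x}

/-- General position: the intersection of any `k ≤ d` of the hyperplanes is a (nonempty) affine
subspace of dimension `d - k`, and no `d + 1` hyperplanes have a common point. In particular the
`n` hyperplanes are pairwise distinct, so that `n` is the cardinality of the arrangement. -/
def GeneralPosition {d n : ℕ} (𝓗 : Arrangement d n) : Prop :=
  (∀ A : Finset (Fin n), A.card ≤ d →
    ∃ L : AffineSubspace ℝ (Fin d → ℝ), (L : Set (Fin d → ℝ)) = ⋂ i ∈ A, 𝓗.H i ∧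
      (L : Set (Fin d → ℝ)).Nonempty ∧ Module.finrank ℝ L.direction + A.card = d) ∧
  (∀ A : Finset (Fin n), A.card = d + 1 → (⋂ i ∈ A, 𝓗.H i) = ∅)

/-- The hyperplane `H e` separates `C` from `C'`: they lie in opposite open half-spaces. -/
def Separates {d n : ℕ} (𝓗 : Arrangement d n) (e : Fin n) (C C' : Set (Fin d → ℝ)) : Prop :=
  (C ⊆ 𝓗.pos e ∧ C' ⊆ 𝓗.neg e) ∨ (C ⊆ 𝓗.neg e ∧ C' ⊆ 𝓗.pos e)

theorem separates_comm {d n : ℕ} (𝓗 : Arrangement d n) (e : Fin n) (C C' : Set (Fin d → ℝ)) :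
    𝓗.Separates e C C' ↔ 𝓗.Separates e C' C := by
  unfold Separates; tauto

theorem not_separates_self {d n : ℕ} (𝓗 : Arrangement d n) (e : Fin n) (C : 𝓗.chambers) :
    ¬ 𝓗.Separates e C C := by
  obtain ⟨C, x, hx, rfl⟩ := C
  have hm := mem_connectedComponentIn hx
  rintro (⟨h, h'⟩ | ⟨h, h'⟩)
  · exact lt_asymm (Set.mem_ofPred.1 (h hm)) (Set.mem_ofPred.1 (h' hm))
  · exact lt_asymm (Set.mem_ofPred.1 (h hm)) (Set.mem_ofPred.1 (h' hm))

/-- The chamber graph: two chambers are adjacent iff they are separated by exactly one of the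
hyperplanes. -/
def chamberGraph {d n : ℕ} (𝓗 : Arrangement d n) : SimpleGraph 𝓗.chambers where
  Adj C C' := ∃! e : Fin n, 𝓗.Separates e C C'
  symm := ⟨fun C C' h => by simpa only [𝓗.separates_comm _ (C' : Set (Fin d → ℝ)) C] using h⟩
  loopless := ⟨fun C h => 𝓗.not_separates_self _ C h.choose_spec.1⟩

/-- The edge boundary of a set `S` of chambers: the edges of the chamber graph with exactly one
endpoint in `S`. -/
def edgeBoundary {d n : ℕ} (𝓗 : Arrangement d n) (S : Set 𝓗.chambers) :
    Set (Sym2 𝓗.chambers) :=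
  {q | q ∈ 𝓗.chamberGraph.edgeSet ∧ ∃ C ∈ S, ∃ C' ∉ S, q = s(C, C')}

end Arrangement

/-!
Sign vectors embed the chamber graph as an induced subgraph of the discrete cube, where the degrees
within a set of `m` vertices sum to at most `m * log₂ m`: cut the set along a coordinate, note that
the edges of the cube in that direction form a matching, and use
`a log₂ a + b log₂ b + 2 min a b ≤ (a + b) log₂ (a + b)`.

On the other hand every chamber has at least as many neighbours as the rank of the arrangement,
because the normals of its walls span all normals. Otherwise some direction `v` would be parallel to
every wall but not to every hyperplane; yet the line in direction `v` through a generic point of the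
chamber leaves the chamber through a wall, which is not parallel to `v`, and crosses there no other
hyperplane.

Hence at least `m * (rank - log₂ m)` edges leave a set of `m` chambers, and this is at least `m` as
soon as `m ≤ 2 ^ (rank - 1)`. In general position, with at least `d` hyperplanes, the rank is `d`.
-/

open Finset Function Real Module

section Preliminaries

theorem exists_dotProduct_ne_zero_of_notMem {K ι : Type*} [Field K] [Fintype ι]
    {p : Submodule K (ι → K)} {x : ι → K} (hx : x ∉ p) :
    ∃ v : ι → K, (∀ y ∈ p, y ⬝ᵥ v = 0) ∧ x ⬝ᵥ v ≠ 0 := by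
  classical
  obtain ⟨f, hfx, hfp⟩ := Submodule.exists_le_ker_of_notMem hx
  obtain ⟨v, rfl⟩ := (dotProductEquiv K ι).surjective f
  refine ⟨v, fun y hy ↦ ?_, ?_⟩
  · rw [dotProduct_comm]
    exact hfp hy
  · rwa [dotProduct_comm]

theorem dense_setOf_affineMap_ne_zero {E : Type*} [NormedAddCommGroup E] [NormedSpace ℝ E]
    {f : E →ᵃ[ℝ] ℝ} (hf : f ≠ 0) : Dense {x | f x ≠ 0} := by
  refine interior_eq_empty_iff_dense_compl (s := {x | f x = 0}) |>.1 ?_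
  by_contra! hne
  have hspan : affineSpan ℝ {x | f x = 0} = ⊤ := affineSpan_eq_top_of_nonempty_interior
    (hne.mono (interior_mono (subset_convexHull ℝ _)))
  refine hf (AffineMap.ext_on hspan fun x hx ↦ ?_)
  simpa using hx

theorem exists_mem_forall_affineMap_ne_zero {E ι : Type*} [NormedAddCommGroup E]
    [NormedSpace ℝ E] [FiniteDimensional ℝ E] [Countable ι] {U : Set E} (hU : IsOpen U)
    (hne : U.Nonempty) {f : ι → E →ᵃ[ℝ] ℝ} (hf : ∀ i, f i ≠ 0) : ∃ x ∈ U, ∀ i, f i x ≠ 0 := by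
  have : CompleteSpace E := FiniteDimensional.complete ℝ E
  have hdense : Dense (⋂ i, {x | f i x ≠ 0}) := dense_iInter_of_isOpen
    (fun i ↦ isOpen_ne_fun (f i).continuous_of_finiteDimensional continuous_const)
    fun i ↦ dense_setOf_affineMap_ne_zero (hf i)
  obtain ⟨x, hxU, hx⟩ := hdense.inter_open_nonempty U hU hne
  exact ⟨x, hxU, Set.mem_iInter.1 hx⟩

theorem exists_isolated_max {ι α : Type*} [Finite ι] [LinearOrder α] [DenselyOrdered α]
    {u : ι → α} {a : α} {i₀ : ι} (hi₀ : a < u i₀) (hu : ∀ i j, i ≠ j → a < u j → u i ≠ u j) :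
    ∃ j c, a < c ∧ c < u j ∧ ∀ i, i ≠ j → u i < c := by
  classical
  have := Fintype.ofFinite ι
  have : Nonempty ι := ⟨i₀⟩
  obtain ⟨j, hj⟩ := Finite.exists_max u
  have haj : a < u j := hi₀.trans_le (hj i₀)
  have hlt : (insert a ((univ.erase j).image u)).max' (insert_nonempty _ _) < u j := by
    simpa [max'_lt_iff, haj] using fun i hi ↦ (hj i).lt_of_ne (hu i j hi haj)
  obtain ⟨c, hlo, hhi⟩ := exists_between hlt
  rw [max'_lt_iff] at hlo
  exact ⟨j, c, by simp_all⟩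

theorem mul_logb_two_add_mul_logb_two_add_two_mul_le {a b : ℝ} (ha : 0 ≤ a) (hab : a ≤ b) :
    a * logb 2 a + b * logb 2 b + 2 * a ≤ (a + b) * logb 2 (a + b) := by
  rcases ha.eq_or_lt with rfl | ha
  · simp
  have hb : 0 < b := ha.trans_le hab
  have hsmall : 1 + logb 2 a ≤ logb 2 (a + b) := by
    rw [← logb_self_eq_one one_lt_two, ← logb_mul two_ne_zero ha.ne']
    exact logb_le_logb_of_le one_lt_two (by positivity) (by linarith)
  have hlarge : a ≤ b * (logb 2 (a + b) - logb 2 b) := by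
    have hbernoulli : 2 ≤ ((a + b) / b) ^ (b / a) := by
      convert one_add_mul_self_le_rpow_one_add (s := a / b) (p := b / a)
        (by linarith [div_pos ha hb]) ((one_le_div ha).2 hab) using 1
      · field_simp; norm_num
      · congr 1; field_simp; ring
    have hlog := logb_le_logb_of_le one_lt_two two_pos hbernoulli
    rw [logb_self_eq_one one_lt_two, logb_rpow_eq_mul_logb_of_pos (by positivity),
      logb_div (by positivity) hb.ne', div_mul_eq_mul_div, le_div_iff₀ ha, one_mul] at hlog
    exact hlog
  linarith [mul_le_mul_of_nonneg_left hsmall ha.le]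

theorem mul_logb_two_add_mul_logb_two_add_two_mul_min_le {a b : ℝ} (ha : 0 ≤ a) (hb : 0 ≤ b) :
    a * logb 2 a + b * logb 2 b + 2 * min a b ≤ (a + b) * logb 2 (a + b) := by
  wlog hab : a ≤ b generalizing a b
  · rw [min_comm, add_comm a b, add_comm (a * _)]
    exact this hb ha (le_of_not_ge hab)
  rw [min_eq_left hab]
  exact mul_logb_two_add_mul_logb_two_add_two_mul_le ha hab

end Preliminaries

section Graphs

variable {V : Type*} (G : SimpleGraph V) [DecidableRel G.Adj]

theorem card_interedges_eq_sum (S T : Finset V) :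
    #(G.interedges S T) = ∑ v ∈ S, #{w ∈ T | G.Adj v w} := by
  simp only [SimpleGraph.interedges_def, card_filter, sum_product]

theorem card_interedges_comm (S T : Finset V) : #(G.interedges S T) = #(G.interedges T S) :=
  have := G.symm
  Rel.card_interedges_comm S T

theorem card_interedges_union_self [DecidableEq V] {S T : Finset V} (h : Disjoint S T) :
    #(G.interedges (S ∪ T) (S ∪ T)) =
      #(G.interedges S S) + #(G.interedges T T) + 2 * #(G.interedges S T) := by
  have hTS : #(G.interedges T S) = #(G.interedges S T) :=
    card_interedges_comm G T S
  have hsplit (v : V) : #{w ∈ S ∪ T | G.Adj v w} = #{w ∈ S | G.Adj v w} + #{w ∈ T | G.Adj v w} := by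
    rw [filter_union, card_union_of_disjoint (disjoint_filter_filter h)]
  simp only [card_interedges_eq_sum, sum_union h, hsplit, sum_add_distrib] at hTS ⊢
  omega

theorem card_interedges_compl_eq_ncard [Fintype V] [DecidableEq V] (S : Finset V) :
    #(G.interedges S Sᶜ) =
      {q | q ∈ G.edgeSet ∧ ∃ v ∈ S, ∃ w ∉ S, q = s(v, w)}.ncard := by
  rw [← Set.ncard_coe_finset, ← Set.InjOn.ncard_image (f := fun p ↦ s(p.1, p.2))]
  · congr 1
    ext q
    simp only [Set.mem_image, mem_coe, SimpleGraph.mem_interedges_iff, mem_compl, Prod.exists,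
      Set.mem_ofPred_eq]
    constructor
    · rintro ⟨v, w, ⟨hv, hw, hadj⟩, rfl⟩
      exact ⟨hadj, v, hv, w, hw, rfl⟩
    · rintro ⟨hadj, v, hv, w, hw, rfl⟩
      exact ⟨v, w, ⟨hv, hw, hadj⟩, rfl⟩
  · rintro ⟨v, w⟩ hvw ⟨v', w'⟩ hvw' heq
    simp only [mem_coe, SimpleGraph.mem_interedges_iff, mem_compl, Sym2.eq_iff] at hvw hvw' heq
    rcases heq with ⟨rfl, rfl⟩ | ⟨rfl, rfl⟩
    · rfl
    · exact absurd hvw.1 hvw'.2.1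

theorem mul_card_le_card_interedges_add [Fintype V] [DecidableEq V] {r : ℕ}
    (hr : ∀ v, r ≤ G.degree v) (S : Finset V) :
    r * #S ≤ #(G.interedges S S) + #(G.interedges S Sᶜ) := by
  simp only [card_interedges_eq_sum, ← sum_add_distrib]
  rw [mul_comm, ← smul_eq_mul]
  refine card_nsmul_le_sum _ _ _ fun v _ ↦ (hr v).trans_eq ?_
  rw [← card_union_of_disjoint (disjoint_filter_filter disjoint_compl_right), ← filter_union,
    union_compl, ← G.card_neighborFinset_eq_degree, G.neighborFinset_eq_filter]

theorem card_interedges_map_map {W : Type*} {H : SimpleGraph W} [DecidableRel H.Adj] (f : G ↪g H)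
    (S T : Finset V) :
    #(H.interedges (S.map f.toEmbedding) (T.map f.toEmbedding)) = #(G.interedges S T) := by
  simp [card_interedges_eq_sum, filter_map]

end Graphs

/-- The graph of the discrete cube: two binary vectors are adjacent iff they differ in exactly one
coordinate. -/
def hypercubeGraph (ι : Type*) : SimpleGraph (ι → Bool) where
  Adj s t := ∃! i, s i ≠ t i
  symm := ⟨fun s t h ↦ by simpa only [ne_comm] using h⟩
  loopless := ⟨fun _ h ↦ h.choose_spec.1 rfl⟩

namespace hypercubeGraph

variable {ι : Type*}

theorem eq_of_adj_of_adj {s t u : ι → Bool} {i : ι} (hst : (hypercubeGraph ι).Adj s t)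
    (hsu : (hypercubeGraph ι).Adj s u) (ht : s i ≠ t i) (hu : s i ≠ u i) : t = u := by
  funext j
  by_cases hj : s j = t j ∧ s j = u j
  · exact hj.1.symm.trans hj.2
  · obtain rfl : j = i := by
      rcases not_and_or.1 hj with h | h
      exacts [hst.unique h ht, hsu.unique h hu]
    exact Bool.eq_not.2 ht.symm |>.trans (Bool.eq_not.2 hu.symm).symm

variable [DecidableRel (hypercubeGraph ι).Adj]

/-- The edges of the cube in one coordinate direction form a matching. -/
theorem card_interedges_le_min {i : ι} {S T : Finset (ι → Bool)}
    (h : ∀ s ∈ S, ∀ t ∈ T, s i ≠ t i) : #((hypercubeGraph ι).interedges S T) ≤ min #S #T := by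
  have hleft {S T : Finset (ι → Bool)} (h : ∀ s ∈ S, ∀ t ∈ T, s i ≠ t i) :
      #((hypercubeGraph ι).interedges S T) ≤ #S := by
    refine card_le_card_of_injOn Prod.fst (fun p hp ↦ ?_) ?_
    · exact ((SimpleGraph.mem_interedges_iff _).1 hp).1
    · rintro ⟨s, t⟩ hst ⟨_, u⟩ hsu rfl
      simp only [mem_coe, SimpleGraph.mem_interedges_iff] at hst hsu
      rw [eq_of_adj_of_adj hst.2.2 hsu.2.2 (h _ hst.1 _ hst.2.1) (h _ hsu.1 _ hsu.2.1)]
  have hcomm := card_interedges_comm (hypercubeGraph ι) S T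
  exact le_min (hleft h) (hcomm.trans_le (hleft fun t ht s hs ↦ (h s hs t ht).symm))

theorem card_interedges_self_le (S : Finset (ι → Bool)) :
    (#((hypercubeGraph ι).interedges S S) : ℝ) ≤ #S * logb 2 #S := by
  classical
  induction S using Finset.strongInduction with | H S ih =>
  by_cases hS : (S : Set (ι → Bool)).Subsingleton
  · have hempty : (hypercubeGraph ι).interedges S S = ∅ := by
      refine eq_empty_of_forall_notMem fun p hp ↦ ?_
      obtain ⟨h₁, h₂, hadj⟩ := (SimpleGraph.mem_interedges_iff _).1 hp
      exact hadj.ne (hS h₁ h₂)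
    rw [hempty, card_empty, Nat.cast_zero]
    exact mul_nonneg (Nat.cast_nonneg _) (div_nonneg (log_natCast_nonneg _) (log_nonneg one_le_two))
  · obtain ⟨s, hs, t, ht, hst⟩ := Set.not_subsingleton_iff.1 hS
    obtain ⟨i, hi⟩ := Function.ne_iff.1 hst
    set A := {x ∈ S | x i = s i}
    set B := {x ∈ S | x i ≠ s i}
    have hAS : A ⊂ S := filter_ssubset.2 ⟨t, ht, hi.symm⟩
    have hBS : B ⊂ S := filter_ssubset.2 ⟨s, hs, not_not.2 rfl⟩
    have hdisj : Disjoint A B := disjoint_filter_filter_not _ _ _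
    have hunion : A ∪ B = S := filter_union_filter_not_eq _ _
    have hcross : ∀ x ∈ A, ∀ y ∈ B, x i ≠ y i := fun x hx y hy h ↦
      (mem_filter.1 hy).2 (h.symm.trans (mem_filter.1 hx).2)
    have hmatching := card_interedges_le_min hcross
    rw [← hunion, card_interedges_union_self _ hdisj, card_union_of_disjoint hdisj]
    have hnum := mul_logb_two_add_mul_logb_two_add_two_mul_min_le
      (Nat.cast_nonneg (α := ℝ) #A) (Nat.cast_nonneg #B)
    have hihA := ih A hAS
    have hihB := ih B hBS
    have : (#((hypercubeGraph ι).interedges A B) : ℝ) ≤ min (#A : ℝ) #B := mod_cast hmatching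
    push_cast
    linarith

end hypercubeGraph

namespace Arrangement

variable {d n : ℕ} (𝓗 : Arrangement d n)

/-- The affine function `x ↦ normal i ⬝ᵥ x - offset i`, whose sign tells on which side of the
`i`-th hyperplane a point lies. -/
noncomputable def affineForm (i : Fin n) : (Fin d → ℝ) →ᵃ[ℝ] ℝ :=
  (dotProductEquiv ℝ (Fin d) (𝓗.normal i)).toAffineMap - AffineMap.const ℝ _ (𝓗.offset i)

theorem affineForm_apply (i : Fin n) (x : Fin d → ℝ) :
    𝓗.affineForm i x = 𝓗.normal i ⬝ᵥ x - 𝓗.offset i := rfl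

theorem affineForm_add_smul (i : Fin n) (x v : Fin d → ℝ) (t : ℝ) :
    𝓗.affineForm i (x + t • v) = 𝓗.affineForm i x + t * (𝓗.normal i ⬝ᵥ v) := by
  simp only [affineForm_apply, dotProduct_add, dotProduct_smul, smul_eq_mul]
  ring

theorem affineForm_ne_zero (i : Fin n) : 𝓗.affineForm i ≠ 0 := by
  intro h0
  have hself := 𝓗.affineForm_add_smul i 0 (𝓗.normal i) 1
  simp only [h0, AffineMap.coe_zero, Pi.zero_apply, one_mul, zero_add] at hself
  exact 𝓗.normal_ne i (dotProduct_self_eq_zero.1 hself.symm)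

theorem continuous_affineForm (i : Fin n) : Continuous (𝓗.affineForm i) :=
  (𝓗.affineForm i).continuous_of_finiteDimensional

variable {𝓗}

theorem mem_H {i : Fin n} {x : Fin d → ℝ} : x ∈ 𝓗.H i ↔ 𝓗.affineForm i x = 0 :=
  sub_eq_zero.symm

theorem mem_pos {i : Fin n} {x : Fin d → ℝ} : x ∈ 𝓗.pos i ↔ 0 < 𝓗.affineForm i x :=
  (sub_pos (a := 𝓗.normal i ⬝ᵥ x)).symm

theorem mem_neg {i : Fin n} {x : Fin d → ℝ} : x ∈ 𝓗.neg i ↔ 𝓗.affineForm i x < 0 :=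
  (sub_neg (a := 𝓗.normal i ⬝ᵥ x)).symm

theorem mem_free {x : Fin d → ℝ} : x ∈ 𝓗.free ↔ ∀ i, 𝓗.affineForm i x ≠ 0 := by
  simp only [free, Set.mem_compl_iff, Set.mem_iUnion, not_exists, mem_H, ne_eq]

variable (𝓗)

theorem pos_eq_preimage (i : Fin n) : 𝓗.pos i = 𝓗.affineForm i ⁻¹' Set.Ioi 0 :=
  Set.ext fun _ ↦ mem_pos

theorem neg_eq_preimage (i : Fin n) : 𝓗.neg i = 𝓗.affineForm i ⁻¹' Set.Iio 0 :=
  Set.ext fun _ ↦ mem_neg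

theorem isOpen_pos (i : Fin n) : IsOpen (𝓗.pos i) :=
  𝓗.pos_eq_preimage i ▸ isOpen_Ioi.preimage (𝓗.continuous_affineForm i)

theorem isOpen_neg (i : Fin n) : IsOpen (𝓗.neg i) :=
  𝓗.neg_eq_preimage i ▸ isOpen_Iio.preimage (𝓗.continuous_affineForm i)

theorem convex_pos (i : Fin n) : Convex ℝ (𝓗.pos i) :=
  𝓗.pos_eq_preimage i ▸ (convex_Ioi 0).affine_preimage _

theorem convex_neg (i : Fin n) : Convex ℝ (𝓗.neg i) :=
  𝓗.neg_eq_preimage i ▸ (convex_Iio 0).affine_preimage _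

theorem disjoint_pos_neg (i : Fin n) : Disjoint (𝓗.pos i) (𝓗.neg i) :=
  Set.disjoint_left.2 fun _ hpos hneg ↦ lt_asymm (mem_pos.1 hpos) (mem_neg.1 hneg)

theorem free_subset_pos_union_neg (i : Fin n) : 𝓗.free ⊆ 𝓗.pos i ∪ 𝓗.neg i := fun _ hx ↦
  (mem_free.1 hx i).lt_or_gt.symm.imp mem_pos.2 mem_neg.2

theorem isOpen_free : IsOpen 𝓗.free := by
  have hfree : 𝓗.free = ⋂ i, {x | 𝓗.affineForm i x ≠ 0} := by
    ext x
    simp only [mem_free, Set.mem_iInter, Set.mem_ofPred_eq]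
  rw [hfree]
  exact isOpen_iInter_of_finite fun i ↦
    isOpen_ne_fun (𝓗.continuous_affineForm i) continuous_const

variable {𝓗}

theorem chamber_nonempty (C : 𝓗.chambers) : (C : Set (Fin d → ℝ)).Nonempty := by
  obtain ⟨_, x, hx, rfl⟩ := C
  exact ⟨x, mem_connectedComponentIn hx⟩

theorem isOpen_chamber (C : 𝓗.chambers) : IsOpen (C : Set (Fin d → ℝ)) := by
  obtain ⟨_, x, hx, rfl⟩ := C
  exact 𝓗.isOpen_free.connectedComponentIn

theorem chamber_subset_free (C : 𝓗.chambers) : (C : Set (Fin d → ℝ)) ⊆ 𝓗.free := by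
  obtain ⟨_, x, hx, rfl⟩ := C
  exact connectedComponentIn_subset _ _

theorem exists_chamber_mem {x : Fin d → ℝ} (hx : x ∈ 𝓗.free) :
    ∃ C : 𝓗.chambers, x ∈ (C : Set (Fin d → ℝ)) :=
  ⟨⟨_, x, hx, rfl⟩, mem_connectedComponentIn hx⟩

theorem chamber_subset_pos_or_subset_neg (C : 𝓗.chambers) (i : Fin n) :
    (C : Set (Fin d → ℝ)) ⊆ 𝓗.pos i ∨ (C : Set (Fin d → ℝ)) ⊆ 𝓗.neg i := by
  have hpre : IsPreconnected (C : Set (Fin d → ℝ)) := by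
    obtain ⟨_, x, hx, rfl⟩ := C
    exact isPreconnected_connectedComponentIn
  exact hpre.subset_or_subset (𝓗.isOpen_pos i) (𝓗.isOpen_neg i) (𝓗.disjoint_pos_neg i)
    ((chamber_subset_free C).trans (𝓗.free_subset_pos_union_neg i))

theorem chamber_subset_pos_iff {C : 𝓗.chambers} {x : Fin d → ℝ} (hx : x ∈ (C : Set _))
    {i : Fin n} : (C : Set (Fin d → ℝ)) ⊆ 𝓗.pos i ↔ x ∈ 𝓗.pos i :=
  ⟨fun h ↦ h hx, fun h ↦ (chamber_subset_pos_or_subset_neg C i).resolve_right fun hneg ↦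
    Set.disjoint_left.1 (𝓗.disjoint_pos_neg i) h (hneg hx)⟩

theorem chamber_subset_neg_iff {C : 𝓗.chambers} {x : Fin d → ℝ} (hx : x ∈ (C : Set _))
    {i : Fin n} : (C : Set (Fin d → ℝ)) ⊆ 𝓗.neg i ↔ x ∈ 𝓗.neg i :=
  ⟨fun h ↦ h hx, fun h ↦ (chamber_subset_pos_or_subset_neg C i).resolve_left fun hpos ↦
    Set.disjoint_left.1 (𝓗.disjoint_pos_neg i) (hpos hx) h⟩

theorem separates_iff {C C' : 𝓗.chambers} {x y : Fin d → ℝ} (hx : x ∈ (C : Set _))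
    (hy : y ∈ (C' : Set _)) {i : Fin n} :
    𝓗.Separates i C C' ↔ 𝓗.affineForm i x * 𝓗.affineForm i y < 0 := by
  rw [Separates, chamber_subset_pos_iff hx, chamber_subset_neg_iff hx, chamber_subset_pos_iff hy,
    chamber_subset_neg_iff hy, mul_neg_iff, mem_pos, mem_neg, mem_pos, mem_neg]

theorem chamber_eq_of_forall_not_separates {C C' : 𝓗.chambers}
    (h : ∀ i, ¬ 𝓗.Separates i C C') : C = C' := by
  obtain ⟨_, x, hx, rfl⟩ := C
  obtain ⟨_, y, hy, rfl⟩ := C'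
  refine Subtype.ext (connectedComponentIn_eq ?_)
  have hfree : segment ℝ x y ⊆ 𝓗.free := by
    refine fun z hz ↦ mem_free.2 fun i ↦ ?_
    have hxy : ¬ 𝓗.affineForm i x * 𝓗.affineForm i y < 0 := (separates_iff
      (mem_connectedComponentIn hx) (mem_connectedComponentIn hy)).not.1 (h i)
    rcases (mem_free.1 hx i).lt_or_gt with hxi | hxi
    · have hyi := (mem_free.1 hy i).lt_or_gt.resolve_right fun hyi ↦
        hxy (mul_neg_of_neg_of_pos hxi hyi)
      exact (mem_neg.1 <|
        (𝓗.convex_neg i).segment_subset (mem_neg.2 hxi) (mem_neg.2 hyi) hz).ne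
    · have hyi := (mem_free.1 hy i).lt_or_gt.resolve_left fun hyi ↦
        hxy (mul_neg_of_pos_of_neg hxi hyi)
      exact (mem_pos.1 <|
        (𝓗.convex_pos i).segment_subset (mem_pos.2 hxi) (mem_pos.2 hyi) hz).ne'
  exact (convex_segment x y).isPreconnected.subset_connectedComponentIn (left_mem_segment ℝ x y)
    hfree (right_mem_segment ℝ x y)

open Classical in
/-- The sign vector of a chamber, recording on which side of each hyperplane it lies. -/
noncomputable def signVector (C : 𝓗.chambers) (i : Fin n) : Bool :=
  decide ((C : Set (Fin d → ℝ)) ⊆ 𝓗.pos i)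

theorem separates_iff_signVector_ne {C C' : 𝓗.chambers} {i : Fin n} :
    𝓗.Separates i C C' ↔ signVector C i ≠ signVector C' i := by
  have hneg (D : 𝓗.chambers) : (D : Set (Fin d → ℝ)) ⊆ 𝓗.neg i ↔
      ¬ (D : Set (Fin d → ℝ)) ⊆ 𝓗.pos i := by
    obtain ⟨x, hx⟩ := chamber_nonempty D
    rw [chamber_subset_neg_iff hx, chamber_subset_pos_iff hx, mem_neg, mem_pos]
    exact ⟨lt_asymm, fun h ↦ (not_lt.1 h).lt_of_ne (mem_free.1 (chamber_subset_free D hx) i)⟩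
  rw [Separates, hneg, hneg, signVector, signVector, Ne, decide_eq_decide]
  tauto

theorem signVector_injective : Injective (signVector (𝓗 := 𝓗)) := fun _ _ h ↦
  chamber_eq_of_forall_not_separates fun i hi ↦ separates_iff_signVector_ne.1 hi (congrFun h i)

instance : Finite 𝓗.chambers := Finite.of_injective _ signVector_injective

variable (𝓗) in
/-- Sign vectors realize the chamber graph as an induced subgraph of the discrete cube. -/
noncomputable def chamberGraphEmbedding : 𝓗.chamberGraph ↪g hypercubeGraph (Fin n) where
  toFun := signVector
  inj' := signVector_injective
  map_rel_iff' := by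
    intro C C'
    simp only [hypercubeGraph, chamberGraph, separates_iff_signVector_ne]
    rfl

theorem linearIndependent_affineForm_pair {i j : Fin n} (h : 𝓗.H i ≠ 𝓗.H j) :
    LinearIndependent ℝ ![𝓗.affineForm i, 𝓗.affineForm j] := by
  rw [LinearIndependent.pair_iff' (𝓗.affineForm_ne_zero i)]
  intro a ha
  have ha0 : a ≠ 0 := by
    rintro rfl
    exact 𝓗.affineForm_ne_zero j (by rw [← ha, zero_smul])
  refine h (Set.ext fun x ↦ ?_)
  rw [mem_H, mem_H, ← ha, AffineMap.coe_smul, Pi.smul_apply, smul_eq_mul, mul_eq_zero,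
    or_iff_right ha0]

/-- The inequality says that the line through `x` in direction `v` does not meet the `i`-th and the
`j`-th hyperplane in the same point. -/
theorem exists_mem_chamber_forall_mul_ne (hH : Injective 𝓗.H) (C : 𝓗.chambers)
    (v : Fin d → ℝ) : ∃ x ∈ (C : Set (Fin d → ℝ)), ∀ i j, i ≠ j → 𝓗.normal j ⬝ᵥ v ≠ 0 →
      𝓗.normal j ⬝ᵥ v * 𝓗.affineForm i x ≠ 𝓗.normal i ⬝ᵥ v * 𝓗.affineForm j x := by
  let f (p : {p : Fin n × Fin n // p.1 ≠ p.2 ∧ 𝓗.normal p.2 ⬝ᵥ v ≠ 0}) :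
      (Fin d → ℝ) →ᵃ[ℝ] ℝ :=
    (𝓗.normal p.1.2 ⬝ᵥ v) • 𝓗.affineForm p.1.1 - (𝓗.normal p.1.1 ⬝ᵥ v) • 𝓗.affineForm p.1.2
  have hf (p) : f p ≠ 0 := fun h0 ↦ p.2.2
    (LinearIndependent.pair_iff.1 (linearIndependent_affineForm_pair (hH.ne p.2.1)) _
      (-(𝓗.normal p.1.1 ⬝ᵥ v)) (by rw [neg_smul, ← sub_eq_add_neg]; exact h0)).1
  obtain ⟨x, hxC, hx⟩ :=
    exists_mem_forall_affineMap_ne_zero (isOpen_chamber C) (chamber_nonempty C) hf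
  exact ⟨x, hxC, fun i j hij hj ↦ sub_ne_zero.1 (hx ⟨(i, j), hij, hj⟩)⟩

theorem exists_forall_mul_affineForm_neg_iff {x v : Fin d → ℝ} (hx : x ∈ 𝓗.free)
    (hgen : ∀ i j, i ≠ j → 𝓗.normal j ⬝ᵥ v ≠ 0 →
      𝓗.normal j ⬝ᵥ v * 𝓗.affineForm i x ≠ 𝓗.normal i ⬝ᵥ v * 𝓗.affineForm j x)
    {i₀ : Fin n} (hi₀ : 𝓗.normal i₀ ⬝ᵥ v ≠ 0) :
    ∃ j, 𝓗.normal j ⬝ᵥ v ≠ 0 ∧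
      ∃ y ∈ 𝓗.free, ∀ i, 𝓗.affineForm i x * 𝓗.affineForm i y < 0 ↔ i = j := by
  rw [mem_free] at hx
  -- The point `x + t • v` lies on the `i`-th hyperplane iff `t * u i = 1`, so the first hyperplane
  -- met for `t > 0` is the one with the largest `u i`.
  let u (i : Fin n) : ℝ := -(𝓗.normal i ⬝ᵥ v) / 𝓗.affineForm i x
  wlog hpos : 0 < u i₀ generalizing v
  · obtain ⟨j, hj, hy⟩ := this (v := -v) (by simpa using hgen) (by simpa using hi₀) (by
      have hu₀ : u i₀ ≠ 0 := div_ne_zero (neg_ne_zero.2 hi₀) (hx i₀)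
      simpa [u, neg_div] using (not_lt.1 hpos).lt_of_ne hu₀)
    exact ⟨j, by simpa using hj, hy⟩
  obtain ⟨j, c, hc, hcj, hci⟩ := exists_isolated_max hpos fun i j hij hj heq ↦ by
    refine hgen i j hij (fun h0 ↦ by simp [u, h0] at hj) ?_
    have := hx i
    have := hx j
    simp only [u] at heq
    field_simp at heq
    linarith
  have hval (i : Fin n) : 𝓗.affineForm i (x + c⁻¹ • v) = 𝓗.affineForm i x * ((c - u i) / c) := by
    have := hx i
    rw [affineForm_add_smul]
    simp only [u]
    field_simp
    ring
  have hprod (i : Fin n) : 𝓗.affineForm i x * 𝓗.affineForm i (x + c⁻¹ • v) =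
      𝓗.affineForm i x ^ 2 / c * (c - u i) := by rw [hval]; ring
  have hu (i : Fin n) : u i ≠ c := by
    rcases eq_or_ne i j with rfl | hij
    exacts [hcj.ne', (hci i hij).ne]
  refine ⟨j, fun h0 ↦ ?_, x + c⁻¹ • v, ?_, fun i ↦ ?_⟩
  · exact (hc.trans hcj).ne' (by simp [u, h0])
  · exact mem_free.2 fun i ↦ by
      rw [hval]
      exact mul_ne_zero (hx i) (div_ne_zero (sub_ne_zero.2 (hu i).symm) hc.ne')
  · have := hx i
    rw [hprod, ← smul_eq_mul, smul_neg_iff_of_pos_left (by positivity), sub_neg]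
    exact ⟨fun h ↦ by_contra fun hij ↦ lt_asymm h (hci i hij), fun h ↦ h ▸ hcj⟩

/-- The rank of an arrangement: the dimension of the span of its normal vectors. -/
noncomputable def rank (𝓗 : Arrangement d n) : ℕ := (Set.range 𝓗.normal).finrank ℝ

/-- The walls of a chamber, given by the indices of the hyperplanes that separate it from an
adjacent chamber. -/
def walls (C : 𝓗.chambers) : Set (Fin n) :=
  {i | ∃ C', 𝓗.chamberGraph.Adj C C' ∧ 𝓗.Separates i C C'}

theorem exists_mem_walls_dotProduct_ne_zero (hH : Injective 𝓗.H) (C : 𝓗.chambers)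
    {v : Fin d → ℝ} {i₀ : Fin n} (hi₀ : 𝓗.normal i₀ ⬝ᵥ v ≠ 0) :
    ∃ j ∈ walls C, 𝓗.normal j ⬝ᵥ v ≠ 0 := by
  obtain ⟨x, hx, hgen⟩ := exists_mem_chamber_forall_mul_ne hH C v
  obtain ⟨j, hj, y, hy, hxy⟩ :=
    exists_forall_mul_affineForm_neg_iff (chamber_subset_free C hx) hgen hi₀
  obtain ⟨C', hyC'⟩ := exists_chamber_mem hy
  have hsep (i : Fin n) : 𝓗.Separates i C C' ↔ i = j := (separates_iff hx hyC').trans (hxy i)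
  have hadj : 𝓗.chamberGraph.Adj C C' := ⟨j, (hsep j).2 rfl, fun i ↦ (hsep i).1⟩
  exact ⟨j, ⟨C', hadj, (hsep j).2 rfl⟩, hj⟩

theorem rank_le_ncard_walls (hH : Injective 𝓗.H) (C : 𝓗.chambers) :
    𝓗.rank ≤ (walls C).ncard := by
  classical
  have hspan : Submodule.span ℝ (Set.range 𝓗.normal) ≤
      Submodule.span ℝ (𝓗.normal '' walls C) := by
    rw [Submodule.span_le, Set.range_subset_iff]
    by_contra! h
    obtain ⟨i₀, hi₀⟩ := h
    obtain ⟨v, hv, hi₀v⟩ := exists_dotProduct_ne_zero_of_notMem hi₀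
    obtain ⟨j, hj, hjv⟩ := exists_mem_walls_dotProduct_ne_zero hH C hi₀v
    exact hjv (hv _ (Submodule.subset_span (Set.mem_image_of_mem _ hj)))
  calc 𝓗.rank ≤ (𝓗.normal '' walls C).finrank ℝ := Submodule.finrank_mono hspan
    _ ≤ (𝓗.normal '' walls C).ncard := by
      rw [Set.ncard_eq_toFinset_card']
      exact finrank_span_le_card _
    _ ≤ (walls C).ncard := Set.ncard_image_le

theorem ncard_walls_le_degree (C : 𝓗.chambers) [Fintype (𝓗.chamberGraph.neighborSet C)] :
    (walls C).ncard ≤ 𝓗.chamberGraph.degree C := by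
  have : Nonempty 𝓗.chambers := ⟨C⟩
  have hwalls (i : Fin n) (hi : i ∈ walls C) :
      ∃ C' ∈ 𝓗.chamberGraph.neighborSet C, 𝓗.Separates i C C' := hi
  choose! f hf hsep using hwalls
  rw [← SimpleGraph.card_neighborSet_eq_degree, ← Nat.card_eq_fintype_card, Nat.card_coe_set_eq]
  refine Set.ncard_le_ncard_of_injOn f hf fun i hi j hj hij ↦ ?_
  exact (hf i hi).unique (hsep i hi) (hij ▸ hsep j hj)

theorem rank_mul_ncard_le (hH : Injective 𝓗.H) (S : Set 𝓗.chambers) :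
    (𝓗.rank * S.ncard : ℝ) ≤ S.ncard * logb 2 S.ncard + (𝓗.edgeBoundary S).ncard := by
  classical
  have := Fintype.ofFinite 𝓗.chambers
  lift S to Finset 𝓗.chambers using S.toFinite
  have hdegree := mul_card_le_card_interedges_add 𝓗.chamberGraph
    (fun C ↦ (rank_le_ncard_walls hH C).trans (ncard_walls_le_degree C)) S
  have hboundary : _ = (𝓗.edgeBoundary S).ncard := card_interedges_compl_eq_ncard 𝓗.chamberGraph S
  have hinner := hypercubeGraph.card_interedges_self_le
    (S.map 𝓗.chamberGraphEmbedding.toEmbedding)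
  rw [card_interedges_map_map, card_map] at hinner
  rw [Set.ncard_coe_finset]
  have : (𝓗.rank * #S : ℝ) ≤ #(𝓗.chamberGraph.interedges S S) + (𝓗.edgeBoundary S).ncard := by
    rw [← hboundary]
    exact_mod_cast hdegree
  linarith

theorem GeneralPosition.injective_H (hgp : 𝓗.GeneralPosition) : Injective 𝓗.H := by
  intro i j hij
  by_contra hne
  have hcard : #{i, j} = 2 := card_pair hne
  have hd : d ≠ 0 := by
    rintro rfl
    exact 𝓗.normal_ne i (Subsingleton.elim _ _)
  have hinter : ⋂ k ∈ ({i, j} : Finset (Fin n)), 𝓗.H k = ⋂ k ∈ ({i} : Finset (Fin n)), 𝓗.H k := by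
    simp [hij]
  obtain ⟨L, hL, hLne, hLdim⟩ := hgp.1 {i} (by rw [card_singleton]; omega)
  rcases (Nat.one_le_iff_ne_zero.2 hd).eq_or_lt with rfl | hd'
  · have hempty := hgp.2 {i, j} hcard
    rw [hinter, ← hL] at hempty
    exact hLne.ne_empty hempty
  · obtain ⟨L', hL', -, hLdim'⟩ := hgp.1 {i, j} (by omega)
    obtain rfl : L' = L := SetLike.coe_injective (by rw [hL, hL', hinter])
    rw [card_singleton] at hLdim
    omega

theorem GeneralPosition.rank_eq (hgp : 𝓗.GeneralPosition) (hn : d ≤ n) : 𝓗.rank = d := by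
  have hspan : Submodule.span ℝ (Set.range 𝓗.normal) = ⊤ := by
    by_contra h
    obtain ⟨w, hw⟩ := SetLike.exists_not_mem_of_ne_top _ h rfl
    obtain ⟨v, hv, hwv⟩ := exists_dotProduct_ne_zero_of_notMem hw
    obtain ⟨A, -, hA⟩ := exists_subset_card_eq (s := (univ : Finset (Fin n))) (n := d)
      (by simpa using hn)
    obtain ⟨L, hL, ⟨p, hp⟩, hdim⟩ := hgp.1 A hA.le
    have hpv : p + v ∈ L := by
      simp only [← SetLike.mem_coe, hL, Set.mem_iInter, mem_H] at hp ⊢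
      intro i hi
      have hiv : 𝓗.normal i ⬝ᵥ v = 0 := hv _ (Submodule.subset_span (Set.mem_range_self i))
      simpa [hp i hi, hiv] using 𝓗.affineForm_add_smul i p v 1
    have hvL : v ∈ L.direction := by
      simpa using AffineSubspace.vsub_mem_direction hpv hp
    have hbot : L.direction = ⊥ := Submodule.finrank_eq_zero.1 (by omega)
    rw [hbot, Submodule.mem_bot] at hvL
    exact hwv (by rw [hvL, dotProduct_zero])
  rw [rank, Set.finrank, hspan, finrank_top, finrank_fin_fun]

end Arrangement

theorem stmt1_general {d n : ℕ} (𝓗 : Arrangement d n) (hH : Injective 𝓗.H)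
    (S : Set 𝓗.chambers) (hS : (S.ncard : ℝ) ≤ 2 ^ ((𝓗.rank : ℤ) - 1)) :
    S.ncard ≤ (𝓗.edgeBoundary S).ncard := by
  rcases S.ncard.eq_zero_or_pos with h0 | hpos
  · simp [h0]
  have hlog : logb 2 S.ncard ≤ 𝓗.rank - 1 := by
    rw [logb_le_iff_le_rpow one_lt_two (mod_cast hpos)]
    exact_mod_cast hS
  have hmul : S.ncard * logb 2 S.ncard ≤ S.ncard * ((𝓗.rank : ℝ) - 1) := by gcongr
  have hbound := 𝓗.rank_mul_ncard_le hH S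
  exact_mod_cast (by linarith : (S.ncard : ℝ) ≤ (𝓗.edgeBoundary S).ncard)

theorem stmt1 {d n : ℕ} (𝓗 : Arrangement d n) (hgp : 𝓗.GeneralPosition) (hn : d ≤ n)
    (S : Set 𝓗.chambers) (hS : (S.ncard : ℝ) ≤ 2 ^ ((d : ℤ) - 1)) :
    S.ncard ≤ (𝓗.edgeBoundary S).ncard :=
  stmt1_general 𝓗 hgp.injective_H S (by rwa [hgp.rank_eq hn])
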